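/- Let d ≥ 2 and let I, J be nonempty proper subsets of [d]. Then there exist finitely many pairs (L_1, p_1), …, (L_m, p_m), where each L_t is a nonempty proper subset of [d] and each p_t ∈ ℝ^d, such that the set A = ⋂_{t=1}^m H_{L_t,p_t}^+ approximates T_K for every K ∈ {I, J, I ∪ J} and avoids T_K for every nonempty K ⊆ [d] with K ∉ {I, J, I ∪ J}. In other words, A is an approximating neighbourhood of T_I ∪ T_J ∪ T_{I∪J} represented as a finite intersection of open tropical halfspaces. -/

import Mathlib

open EMetric

/-- `m(x) = min_l x_l`, the minimum coordinate of `x`. -/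
noncomputable def minCoord {d : ℕ} (x : EuclideanSpace ℝ (Fin d)) : ℝ :=
  sInf (Set.range fun l => x l)

/-- `T_K`: the set of points of type `K` with respect to the tropical (min-plus)
hyperplane with apex `0`. -/
noncomputable def tropType {d : ℕ} (K : Finset (Fin d)) :
    Set (EuclideanSpace ℝ (Fin d)) :=
  {x | {k | x k = minCoord x} = (K : Set (Fin d))}

/-- The open tropical halfspace `H_{L,p}^+ = {x : min_{i∈L}(x_i−p_i) < min_{k∉L}(x_k−p_k)}`. -/
noncomputable def openHalfspace {d : ℕ} (L : Finset (Fin d))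
    (p : EuclideanSpace ℝ (Fin d)) : Set (EuclideanSpace ℝ (Fin d)) :=
  {x | sInf ((fun l => x l - p l) '' (L : Set (Fin d))) <
       sInf ((fun l => x l - p l) '' ((L : Set (Fin d))ᶜ))}

/-- `A` approximates `K`: there is `ε > 0` such that every point of `K` at
(Euclidean) distance at least `ε` from the relative boundary `cl K \ K` of `K`
belongs to `A` (with the distance to the empty set taken to be `+∞`). -/
def Approximates {d : ℕ} (A K : Set (EuclideanSpace ℝ (Fin d))) : Prop :=
  ∃ ε > (0 : ℝ), ∀ x ∈ K, ENNReal.ofReal ε ≤ infEdist x (closure K \ K) → x ∈ A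

/-- `A` avoids `K`: there is `ε > 0` such that every point of `K ∩ A` is at
(Euclidean) distance less than `ε` from the relative boundary `cl K \ K` of `K`
(with the distance to the empty set taken to be `+∞`). -/
def Avoids {d : ℕ} (A K : Set (EuclideanSpace ℝ (Fin d))) : Prop :=
  ∃ ε > (0 : ℝ), ∀ x ∈ K ∩ A, infEdist x (closure K \ K) < ENNReal.ofReal ε

def GoodFor {d : ℕ} (L : Finset (Fin d)) (p : Fin d → ℝ) (S : Finset (Fin d)) : Prop :=
  ∀ a ∈ S, a ∉ L → ∃ b ∈ S, b ∈ L ∧ p a < p b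

def BadFor {d : ℕ} (L : Finset (Fin d)) (p : Fin d → ℝ) (S : Finset (Fin d)) : Prop :=
  ∃ a ∈ S, a ∉ L ∧ ∀ b ∈ S, b ∈ L → p b ≤ p a

theorem comb_choice {d : ℕ} (hd : 2 ≤ d) (I J K : Finset (Fin d))
    (hK : K.Nonempty) (hne : ¬ (K = I ∨ K = J ∨ K = I ∪ J)) :
    ∃ (L : Finset (Fin d)) (p : Fin d → ℝ), (L.Nonempty ∧ L ≠ Finset.univ) ∧
      (∀ a, 0 ≤ p a ∧ p a ≤ 2) ∧ GoodFor L p I ∧ GoodFor L p J ∧ BadFor L p K := by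
  classical
  have compl_ok : ∀ k : Fin d, (({k}ᶜ : Finset (Fin d)).Nonempty ∧
      ({k}ᶜ : Finset (Fin d)) ≠ Finset.univ) := by
    intro k
    have : Nontrivial (Fin d) := Fin.nontrivial_iff_two_le.2 hd
    obtain ⟨j, hj⟩ := exists_ne k
    refine ⟨⟨j, by simpa using hj⟩, fun h => ?_⟩
    have := Finset.mem_univ k
    rw [← h] at this
    simp at this
  push Not at hne
  obtain ⟨h1, h2, h3⟩ := hne
  have main : ∀ I J : Finset (Fin d), K ≠ I → K ≠ I ∪ J → K ⊆ I ∪ J → I ⊆ K →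
      ∃ (L : Finset (Fin d)) (p : Fin d → ℝ), (L.Nonempty ∧ L ≠ Finset.univ) ∧
      (∀ a, 0 ≤ p a ∧ p a ≤ 2) ∧ GoodFor L p I ∧ GoodFor L p J ∧ BadFor L p K := by
    intro I J h1 h3 hs hIK
    obtain ⟨k, hkK, hkI⟩ := Finset.not_subset.1 (fun h => h1 (Finset.Subset.antisymm h hIK))
    obtain ⟨j, hj, hjK⟩ := Finset.not_subset.1 (fun h => h3 (Finset.Subset.antisymm hs h))
    have hjJ : j ∈ J := by
      rcases Finset.mem_union.1 hj with h | h
      · exact absurd (hIK h) hjK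
      · exact h
    have hjk : j ≠ k := by rintro rfl; exact hjK hkK
    refine ⟨{k}ᶜ, fun a => if a = j then 2 else if a = k then 1 else 0, compl_ok k, ?_, ?_, ?_, ?_⟩
    · intro a; dsimp only; split_ifs <;> norm_num
    · intro a ha haL
      have : a = k := by simpa using haL
      subst this; exact absurd ha hkI
    · intro a ha haL
      have : a = k := by simpa using haL
      subst this
      exact ⟨j, hjJ, by simpa using hjk, by simp [hjk.symm]⟩
    · refine ⟨k, hkK, by simp, fun b hb hbL => ?_⟩
      have hbj : b ≠ j := by rintro rfl; exact hjK hb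
      have hbk : b ≠ k := by simpa using hbL
      simp [hbj, hbk, hjk.symm]
  by_cases hs : K ⊆ I ∪ J
  · by_cases hIK : I ⊆ K
    · exact main I J h1 h3 hs hIK
    by_cases hJK : J ⊆ K
    · obtain ⟨L, p, a, b, c, e, f⟩ := main J I h2 (by rwa [Finset.union_comm]) 
        (by rwa [Finset.union_comm]) hJK
      exact ⟨L, p, a, b, e, c, f⟩
    obtain ⟨i, hi, hiK⟩ := Finset.not_subset.1 hIK
    obtain ⟨j, hj, hjK⟩ := Finset.not_subset.1 hJK
    obtain ⟨k, hk⟩ := hK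
    have hki : k ≠ i := by rintro rfl; exact hiK hk
    have hkj : k ≠ j := by rintro rfl; exact hjK hk
    have hkL : k ∉ ({i, j} : Finset (Fin d)) := by simp [hki, hkj]
    refine ⟨{i, j}, fun a => if a ∈ ({i, j} : Finset (Fin d)) then 1 else 0, ⟨⟨i, by simp⟩, ?_⟩,
      ?_, ?_, ?_, ?_⟩
    · intro h; rw [h] at hkL; simp at hkL
    · intro a; dsimp only; split_ifs <;> norm_num
    · intro a _ haL
      refine ⟨i, hi, by simp, ?_⟩
      dsimp only
      rw [if_neg haL, if_pos (by simp)]; norm_num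
    · intro a _ haL
      refine ⟨j, hj, by simp, ?_⟩
      dsimp only
      rw [if_neg haL, if_pos (by simp)]; norm_num
    · refine ⟨k, hk, hkL, fun b hb hbL => ?_⟩
      rcases Finset.mem_insert.1 hbL with h | h
      · subst h; exact absurd hb hiK
      · rw [Finset.mem_singleton] at h; subst h; exact absurd hb hjK
  · obtain ⟨k, hkK, hk⟩ := Finset.not_subset.1 hs
    have hkI : k ∉ I := fun h => hk (Finset.mem_union_left _ h)
    have hkJ : k ∉ J := fun h => hk (Finset.mem_union_right _ h)
    refine ⟨{k}ᶜ, fun a => if a = k then 1 else 0, compl_ok k, ?_, ?_, ?_, ?_⟩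
    · intro a; dsimp only; split_ifs <;> norm_num
    · intro a ha haL
      have : a = k := by simpa using haL
      subst this; exact absurd ha hkI
    · intro a ha haL
      have : a = k := by simpa using haL
      subst this; exact absurd ha hkJ
    · refine ⟨k, hkK, by simp, fun b hb hbL => ?_⟩
      have hbk : b ≠ k := by simpa using hbL
      simp [hbk]

theorem mem_openHalfspace_iff' {d : ℕ} (L : Finset (Fin d)) (hL : L.Nonempty)
    (hL' : L ≠ Finset.univ) (p x : EuclideanSpace ℝ (Fin d)) :
    x ∈ openHalfspace L p ↔ ∃ a ∈ L, ∀ b, b ∉ L → x a - p a < x b - p b := by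
  have hc : ((L : Set (Fin d))ᶜ).Nonempty := by
    by_contra h
    rw [Set.not_nonempty_iff_eq_empty, Set.compl_empty_iff] at h
    exact hL' (by exact_mod_cast h)
  have f1 := (Set.toFinite ((fun l => x l - p l) '' (L : Set (Fin d))))
  have f2 := (Set.toFinite ((fun l => x l - p l) '' ((L : Set (Fin d))ᶜ)))
  have n1 : ((fun l => x l - p l) '' (L : Set (Fin d))).Nonempty :=
    Set.Nonempty.image _ (by exact_mod_cast hL)
  have n2 : ((fun l => x l - p l) '' ((L : Set (Fin d))ᶜ)).Nonempty := hc.image _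
  constructor
  · intro h
    obtain ⟨a, ha, hae⟩ := n1.csInf_mem f1
    refine ⟨a, by exact_mod_cast ha, fun b hb => ?_⟩
    have : sInf ((fun l => x l - p l) '' ((L : Set (Fin d))ᶜ)) ≤ x b - p b :=
      csInf_le f2.bddBelow ⟨b, by simpa using hb, rfl⟩
    have h' : sInf ((fun l => x l - p l) '' (L : Set (Fin d))) <
       sInf ((fun l => x l - p l) '' ((L : Set (Fin d))ᶜ)) := h
    dsimp only at hae
    linarith
  · rintro ⟨a, ha, h⟩
    obtain ⟨b, hb, hbe⟩ := n2.csInf_mem f2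
    have : sInf ((fun l => x l - p l) '' (L : Set (Fin d))) ≤ x a - p a :=
      csInf_le f1.bddBelow ⟨a, by simpa using ha, rfl⟩
    have h' := h b (by simpa using hb)
    change sInf ((fun l => x l - p l) '' (L : Set (Fin d))) <
       sInf ((fun l => x l - p l) '' ((L : Set (Fin d))ᶜ))
    dsimp only at hbe
    linarith

theorem minCoord_eq {d : ℕ} (x : EuclideanSpace ℝ (Fin d)) (i : Fin d)
    (h : ∀ l, x i ≤ x l) : minCoord x = x i := by
  apply IsLeast.csInf_eq
  exact ⟨⟨i, rfl⟩, by rintro _ ⟨l, rfl⟩; exact h l⟩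

theorem minCoord_le' {d : ℕ} (x : EuclideanSpace ℝ (Fin d)) (l : Fin d) : minCoord x ≤ x l :=
  csInf_le (Set.toFinite _).bddBelow ⟨l, rfl⟩

theorem mem_tropType_iff' {d : ℕ} (K : Finset (Fin d)) (x : EuclideanSpace ℝ (Fin d)) :
    x ∈ tropType K ↔ ∀ k, x k = minCoord x ↔ k ∈ K := by
  simp [tropType, Set.ext_iff]

theorem gap_of_dist {d : ℕ} (K : Finset (Fin d)) (hK : K.Nonempty)
    (x : EuclideanSpace ℝ (Fin d)) (hx : x ∈ tropType K)
    (h : ENNReal.ofReal 3 ≤ infEdist x (closure (tropType K) \ tropType K)) :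
    ∀ k, k ∉ K → minCoord x + 3 ≤ x k := by
  classical
  intro k hk
  by_contra hlt
  push Not at hlt
  obtain ⟨i, hi⟩ := hK
  rw [mem_tropType_iff'] at hx
  have hxi := (hx i).2 hi
  have hik : i ≠ k := by rintro rfl; exact hk hi
  set m := minCoord x with hm
  have hkm : m ≤ x k := minCoord_le' x k
  let y : ℝ → EuclideanSpace ℝ (Fin d) := fun t => WithLp.toLp 2 (Function.update x k (m + t))
  have yk : ∀ t, y t k = m + t := fun t => by simp [y]
  have yne : ∀ t l, l ≠ k → y t l = x l := fun t l hl => by simp [y, hl]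
  have ymin : ∀ t, 0 ≤ t → minCoord (y t) = m := by
    intro t ht
    rw [minCoord_eq (y t) i, yne t i hik, hxi]
    intro l
    rw [yne t i hik, hxi]
    by_cases hl : l = k
    · subst hl; rw [yk]; linarith
    · rw [yne t l hl]; exact minCoord_le' x l
  have ymem : ∀ t, 0 < t → y t ∈ tropType K := by
    intro t ht
    rw [mem_tropType_iff']
    intro l
    rw [ymin t ht.le]
    by_cases hl : l = k
    · subst hl; rw [yk]
      exact ⟨fun h => by linarith, fun h => absurd h hk⟩
    · rw [yne t l hl]; exact hx l
  have y0 : y 0 ∉ tropType K := by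
    intro h
    rw [mem_tropType_iff'] at h
    exact hk ((h k).1 (by rw [yk, ymin 0 le_rfl]; ring))
  have dst : ∀ (z : EuclideanSpace ℝ (Fin d)), (∀ l, l ≠ k → z l = x l) →
      dist z (y 0) = |z k - m| := by
    intro z hz
    rw [EuclideanSpace.dist_eq, Finset.sum_eq_single k]
    · rw [Real.sqrt_sq dist_nonneg, yk, Real.dist_eq]; simp
    · intro l _ hl
      rw [yne 0 l hl, hz l hl]; simp
    · simp
  have ycl : y 0 ∈ closure (tropType K) := by
    rw [Metric.mem_closure_iff]
    intro δ hδ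
    refine ⟨y (δ/2), ymem _ (by linarith), ?_⟩
    rw [dist_comm, dst _ (yne _), yk, add_sub_cancel_left, abs_of_pos (by linarith)]
    linarith
  have hle := h.trans (infEdist_le_edist_of_mem (x := x) ⟨ycl, y0⟩)
  rw [edist_dist, dst x (fun _ _ => rfl), abs_of_nonneg (by linarith),
    ENNReal.ofReal_le_ofReal_iff (by linarith)] at hle
  linarith

theorem good_mem {d : ℕ} (L : Finset (Fin d)) (hL : L.Nonempty)
    (hL' : L ≠ Finset.univ) (p : Fin d → ℝ) (hp : ∀ a, 0 ≤ p a ∧ p a ≤ 2)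
    (K : Finset (Fin d)) (hK : K.Nonempty) (hg : GoodFor L p K)
    (x : EuclideanSpace ℝ (Fin d)) (hx : x ∈ tropType K)
    (h : ∀ k, k ∉ K → minCoord x + 3 ≤ x k) :
    x ∈ openHalfspace L (WithLp.toLp 2 p) := by
  classical
  rw [mem_openHalfspace_iff' L hL hL']
  rw [mem_tropType_iff'] at hx
  have hne : (K ∩ L).Nonempty := by
    obtain ⟨a, ha⟩ := hK
    by_cases haL : a ∈ L
    · exact ⟨a, Finset.mem_inter.2 ⟨ha, haL⟩⟩
    · obtain ⟨b, hb, hbL, _⟩ := hg a ha haL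
      exact ⟨b, Finset.mem_inter.2 ⟨hb, hbL⟩⟩
  obtain ⟨a, ha, hmax⟩ := Finset.exists_max_image (K ∩ L) p hne
  obtain ⟨haK, haL⟩ := Finset.mem_inter.1 ha
  refine ⟨a, haL, fun b hb => ?_⟩
  have hxa := (hx a).2 haK
  show x a - p a < x b - p b
  by_cases hbK : b ∈ K
  · have hxb := (hx b).2 hbK
    obtain ⟨c, hc, hcL, hlt⟩ := hg b hbK hb
    have := hmax c (Finset.mem_inter.2 ⟨hc, hcL⟩)
    linarith
  · have := h b hbK
    linarith [(hp a).1, (hp b).2]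

theorem bad_not_mem {d : ℕ} (L : Finset (Fin d)) (hL : L.Nonempty)
    (hL' : L ≠ Finset.univ) (p : Fin d → ℝ) (hp : ∀ a, 0 ≤ p a ∧ p a ≤ 2)
    (K : Finset (Fin d)) (hg : BadFor L p K)
    (x : EuclideanSpace ℝ (Fin d)) (hx : x ∈ tropType K)
    (h : ∀ k, k ∉ K → minCoord x + 3 ≤ x k) :
    x ∉ openHalfspace L (WithLp.toLp 2 p) := by
  rw [mem_openHalfspace_iff' L hL hL']
  rw [mem_tropType_iff'] at hx
  rintro ⟨c, hcL, hc⟩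
  obtain ⟨a, haK, haL, hle⟩ := hg
  have h1 : x c - p c < x a - p a := hc a haL
  have hxa := (hx a).2 haK
  by_cases hcK : c ∈ K
  · have := hle c hcK hcL
    have := (hx c).2 hcK
    linarith
  · have := h c hcK
    linarith [(hp a).1, (hp c).2]

theorem stmt_11 {d : ℕ} (hd : 2 ≤ d) (I J : Finset (Fin d))
    (hI : I.Nonempty) (hI' : I ≠ Finset.univ)
    (hJ : J.Nonempty) (hJ' : J ≠ Finset.univ) :
    ∃ (m : ℕ) (L : Fin m → Finset (Fin d)) (p : Fin m → EuclideanSpace ℝ (Fin d)),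
      (∀ t, (L t).Nonempty ∧ L t ≠ Finset.univ) ∧
      (∀ K : Finset (Fin d), K.Nonempty →
        ((K = I ∨ K = J ∨ K = I ∪ J) →
          Approximates (⋂ t, openHalfspace (L t) (p t)) (tropType K)) ∧
        (¬ (K = I ∨ K = J ∨ K = I ∪ J) →
          Avoids (⋂ t, openHalfspace (L t) (p t)) (tropType K))) := by
  classical
  let T := {K : Finset (Fin d) // K.Nonempty ∧ ¬ (K = I ∨ K = J ∨ K = I ∪ J)}
  have hc : ∀ K : T, _ := fun K => comb_choice hd I J K.1 K.2.1 K.2.2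
  choose L p hL hp hgI hgJ hB using hc
  let e := Fintype.equivFin T
  refine ⟨Fintype.card T, fun t => L (e.symm t), fun t => WithLp.toLp 2 (p (e.symm t)),
    fun t => hL _, fun K hK => ⟨fun hKm => ?_, fun hKn => ?_⟩⟩
  · refine ⟨3, by norm_num, fun x hx hdist => ?_⟩
    have hgap := gap_of_dist K hK x hx hdist
    rw [Set.mem_iInter]
    intro t
    refine good_mem _ (hL _).1 (hL _).2 _ (hp _) K hK ?_ x hx hgap
    rcases hKm with h | h | h
    · rw [h]; exact hgI _
    · rw [h]; exact hgJ _
    · rw [h]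
      intro a ha haL
      rcases Finset.mem_union.1 ha with h | h
      · obtain ⟨b, hb, h2⟩ := hgI _ a h haL
        exact ⟨b, Finset.mem_union_left _ hb, h2⟩
      · obtain ⟨b, hb, h2⟩ := hgJ _ a h haL
        exact ⟨b, Finset.mem_union_right _ hb, h2⟩
  · refine ⟨3, by norm_num, fun x hx => ?_⟩
    by_contra hdist
    rw [not_lt] at hdist
    have hgap := gap_of_dist K hK x hx.1 hdist
    have hxA := Set.mem_iInter.1 hx.2 (e ⟨K, hK, hKn⟩)
    simp only [Equiv.symm_apply_apply] at hxA
    exact bad_not_mem _ (hL _).1 (hL _).2 _ (hp _) K (hB ⟨K, hK, hKn⟩) x hx.1 hgap hxA
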